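/- Let n ≥ 1, m ∈ ℕ ∪ {0}, 0 < α < n, γ ∈ (0,1], 0 < δ < min{γ, (n−α)/m} (for m = 0 just 0 < δ < γ), α̃ = mδ + α, 1 ≤ r ≤ ∞ and δ̃ ≤ min{δ, α̃ − n/r} (with n/∞ = 0). Let K_α : ℝⁿ∖{0} → ℝ be a measurable kernel satisfying the size condition S*_α and the smoothness condition H*_{α,∞} with exponent γ. Let b ∈ Λ(δ) and let (v,w) be a pair of weights in the class H(r, α̃, δ̃). Then there exists a constant C, independent of f and b, such that for every measurable f with f/v ∈ L^{r}(ℝⁿ) for which the integral T^m_{α,b} f(x) = ∫_{ℝⁿ} (b(x) − b(z))^m K_α(x−z) f(z) dz converges absolutely for almost every x and defines a locally integrable function, one has ‖T^m_{α,b} f‖_{𝕃_w(δ̃/n)} ≤ C · ‖b‖_{Λ(δ)}^m · ‖f/v‖_{r}. -/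

import Mathlib

/-!
Write `k(x, z) = (b x - b z)^m K(x - z)` and fix a ball `B = B(c, R)`. By Jensen's inequality and
Tonelli's theorem,
`∫_B |Tf - m_B Tf| ≤ |B|⁻¹ ∫ (∫_B ∫_B |k(x, z) - k(x', z)| dx dx') |f(z)| dz`
(`lintegral_osc_le`), so everything reduces to the oscillation of the kernel in its first variable,
for fixed `z`. Put `s = n - α̃ + δ > 0`. The key estimate (`kernel_osc_le`) is
`∫_B ∫_B |k(x, z) - k(x', z)| dx dx' ≤ C ‖b‖^m |B|² R^δ (|B|^{1/n} + |c - z|)^{-s}`, all `z`.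

* If `|c - z| < 5R`, the triangle inequality and `|k(x, z)| ≤ A₁ ‖b‖^m |x - z|^{α̃ - n}` suffice:
  as `α̃ > 0`, the integral of the latter over `B(z, 6R)` is of order `R^{α̃}`
  (`lintegral_riesz_le`), and `R^{α̃} = R^n R^δ R^{-s}`.
* If `|c - z| ≥ 5R`, the bound holds pointwise (`commutator_kernel_far`), from the smoothness of
  `K`, the Hölder condition on `b` and the inequality `(R/|c - z|)^γ ≤ (R/|c - z|)^δ`.

Hölder's inequality for `|f| / v` and `v (|B|^{1/n} + |c - ·|)^{-s}` (`eN_holder`) then produces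
exactly the norm in the definition of the class `H`, and the powers of `|B|` match.
Null or infinite values of the weights do no harm: if `‖(1/w) χ_B‖_∞ = 0` there is nothing to prove,
and otherwise the class condition forces `v < ∞` almost everywhere, while `f / v ∈ L^r` forces
`f = 0` almost everywhere on `{v = 0}`.
-/

open MeasureTheory Metric ENNReal NNReal

noncomputable section

/-- Euclidean space `ℝⁿ`. -/
abbrev E (n : ℕ) := EuclideanSpace ℝ (Fin n)

/-- `(∫ f^p dμ)^(1/p)` for finite `p`, and the essential supremum for `p = ∞`. -/
noncomputable def eN {n : ℕ} (p : ℝ≥0∞) (f : E n → ℝ≥0∞) (μ : Measure (E n)) : ℝ≥0∞ :=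
  if p = ∞ then essSup f μ else (∫⁻ y, f y ^ p.toReal ∂μ) ^ (1 / p.toReal)

/-- The two-weight class `H(r, αt, δt)` with constant `C`, where `r'` denotes the
conjugate exponent of `r` (so the `r = 1`, `r' = ∞` case is the essential supremum,
built into `eN`). -/
def Hclass (n : ℕ) (r' : ℝ≥0∞) (αt δ δt : ℝ) (v w : E n → ℝ≥0∞) (C : ℝ≥0∞) : Prop :=
  ∀ (c : E n) (R : ℝ), 0 < R →
    essSup (fun y => (w y)⁻¹) (volume.restrict (ball c R)) *
        volume (ball c R) ^ ((δ - δt) / (n : ℝ)) *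
        eN r' (fun y =>
          v y * (volume (ball c R) ^ ((1 : ℝ) / (n : ℝ)) +
            ENNReal.ofReal (dist c y)) ^ (-((n : ℝ) - αt + δ))) volume ≤ C

/-- The local condition (L) with constant `C`. -/
def LocalCond (n : ℕ) (r r' : ℝ≥0∞) (αt δt : ℝ) (v w : E n → ℝ≥0∞) (C : ℝ≥0∞) : Prop :=
  ∀ (c : E n) (R : ℝ), 0 < R →
    essSup (fun y => (w y)⁻¹) (volume.restrict (ball c R)) *
        volume (ball c R) ^ ((αt - δt) / (n : ℝ) - r⁻¹.toReal) *
        eN r' v ((volume (ball c R))⁻¹ • volume.restrict (ball c R)) ≤ C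

/-- The global condition (G) with constant `C`. -/
def GlobalCond (n : ℕ) (r' : ℝ≥0∞) (αt δ δt : ℝ) (v w : E n → ℝ≥0∞) (C : ℝ≥0∞) : Prop :=
  ∀ (c : E n) (R : ℝ), 0 < R →
    essSup (fun y => (w y)⁻¹) (volume.restrict (ball c R)) *
        volume (ball c R) ^ ((δ - δt) / (n : ℝ)) *
        eN r' (fun y => v y * (ENNReal.ofReal (dist c y)) ^ (-((n : ℝ) - αt + δ)))
          (volume.restrict ((ball c R)ᶜ)) ≤ C

/-- `b ∈ Λ(δ)` with Lipschitz-`δ` constant `Cb`. -/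
def LipDelta {n : ℕ} (δ Cb : ℝ) (b : E n → ℝ) : Prop :=
  ∀ x y : E n, |b x - b y| ≤ Cb * dist x y ^ δ

/-- The size condition `S*_α` with constant `A`. -/
def SizeCond (n : ℕ) (α A : ℝ) (K : E n → ℝ) : Prop :=
  ∀ x : E n, x ≠ 0 → |K x| ≤ A * ‖x‖ ^ (α - (n : ℝ))

/-- The smoothness condition `H*_{α,∞}` with exponent `γ` and constant `A`. -/
def SmoothCond (n : ℕ) (α γ A : ℝ) (K : E n → ℝ) : Prop :=
  ∀ x x' y : E n, 2 * dist x x' ≤ dist x y →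
    |K (x - y) - K (x' - y)| + |K (y - x) - K (y - x')| ≤
      A * dist x x' ^ γ / dist x y ^ ((n : ℝ) - α + γ)

/-! ### Integral of a truncated Riesz kernel -/

/-- The kernel `|x|^(a-n)` truncated to a ball of radius `ρ` has integral of order `ρ^a`. -/
lemma lintegral_riesz_le (n : ℕ) (hn : 1 ≤ n) (a ρ : ℝ) (ha : 0 < a) (hρ : 0 < ρ) :
    ∫⁻ x : E n, ENNReal.ofReal ((Set.Iio ρ).indicator (fun t : ℝ => t ^ (a - n)) ‖x‖) =
      ENNReal.ofReal ((n * volume.real (ball (0 : E n) 1) / a) * ρ ^ a) := by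
  have : Nonempty (Fin n) := ⟨⟨0, hn⟩⟩
  have hdim : Module.finrank ℝ (E n) = n := by simp
  have hpt : ∀ y ∈ Set.Ioi (0:ℝ), y ^ (Module.finrank ℝ (E n) - 1) •
      (Set.Iio ρ).indicator (fun t : ℝ => t ^ (a - n)) y =
      (Set.Iio ρ).indicator (fun t : ℝ => t ^ (a - 1)) y := by
    intro y hy
    by_cases h : y ∈ Set.Iio ρ
    · rw [Set.indicator_of_mem h, Set.indicator_of_mem h, hdim, smul_eq_mul, ← Real.rpow_natCast,
        ← Real.rpow_add hy]
      congr 1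
      push_cast [hn]
      ring
    · simp [Set.indicator_of_notMem h]
  have hint : IntegrableOn (fun t : ℝ => t ^ (a - 1)) (Set.Ioo 0 ρ) := by
    have := (intervalIntegral.intervalIntegrable_rpow' (a := 0) (b := ρ) (r := a - 1)
      (by linarith))
    rw [intervalIntegrable_iff_integrableOn_Ioo_of_le hρ.le] at this
    exact this
  have hset : Set.Ioi (0:ℝ) ∩ Set.Iio ρ = Set.Ioo 0 ρ := Set.Ioi_inter_Iio
  have hI : Integrable (fun x : E n => (Set.Iio ρ).indicator (fun t : ℝ => t ^ (a - n)) ‖x‖) := by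
    rw [integrable_fun_norm_addHaar volume (f := (Set.Iio ρ).indicator (fun t : ℝ => t ^ (a - n)))]
    rw [integrableOn_congr_fun hpt measurableSet_Ioi]
    rw [IntegrableOn, integrable_indicator_iff measurableSet_Iio, IntegrableOn,
      Measure.restrict_restrict measurableSet_Iio, Set.inter_comm, hset]
    exact hint
  rw [← ofReal_integral_eq_lintegral_ofReal hI]
  · rw [integral_fun_norm_addHaar volume, setIntegral_congr_fun measurableSet_Ioi hpt,
      setIntegral_indicator measurableSet_Iio, hset, ← integral_Ioc_eq_integral_Ioo,
      ← intervalIntegral.integral_of_le hρ.le, integral_rpow (Or.inl (by linarith)), hdim]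
    congr 1
    simp only [sub_add_cancel, Real.zero_rpow ha.ne', sub_zero, nsmul_eq_mul, smul_eq_mul]
    ring
  · refine Filter.Eventually.of_forall fun x => ?_
    by_cases h : ‖x‖ ∈ Set.Iio ρ
    · simp only [Set.indicator_of_mem h]
      positivity
    · simp [Set.indicator_of_notMem h]

/-! ### Hölder's inequality and finiteness for weighted norms -/

/-- Hölder's inequality for `eN`, for all conjugate exponents in `[1, ∞]`. -/
lemma eN_holder {n : ℕ} (r r' : ℝ≥0∞) (hr : 1 ≤ r) (hconj : r⁻¹ + r'⁻¹ = 1)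
    (f g : E n → ℝ≥0∞) (hf : Measurable f) (hg : Measurable g) :
    ∫⁻ x, f x * g x ≤ eN r f volume * eN r' g volume := by
  rcases eq_or_ne r ∞ with rfl | hr1
  · have h1 : r' = 1 := by simpa using hconj
    subst h1
    simp only [eN, if_true, ENNReal.one_ne_top, if_false, ENNReal.toReal_one, div_one,
      ENNReal.rpow_one]
    rw [← lintegral_const_mul _ hg]
    refine lintegral_mono_ae ?_
    filter_upwards [ENNReal.ae_le_essSup f] with x hx
    gcongr
  rcases eq_or_ne r' ∞ with rfl | hr2
  · have h1 : r = 1 := by simpa using hconj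
    subst h1
    simp only [eN, if_true, ENNReal.one_ne_top, if_false, ENNReal.toReal_one, div_one,
      ENNReal.rpow_one]
    rw [← lintegral_mul_const _ hf]
    refine lintegral_mono_ae ?_
    filter_upwards [ENNReal.ae_le_essSup g] with x hx
    gcongr
  have hr0 : r ≠ 0 := (zero_lt_one.trans_le hr).ne'
  have hr'0 : r' ≠ 0 := by
    rintro rfl
    simp at hconj
  have key : r.toReal.HolderConjugate r'.toReal := by
    have : r.HolderConjugate r' := ⟨by simpa using hconj⟩
    have := ENNReal.HolderTriple.toReal (p := r) (q := r') 1 (ENNReal.toReal_pos hr0 hr1)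
      (ENNReal.toReal_pos hr'0 hr2)
    simpa using this
  simp only [eN, hr1, hr2, if_false]
  exact ENNReal.lintegral_mul_le_Lp_mul_Lq volume key hf.aemeasurable hg.aemeasurable

lemma ae_lt_top_of_eN_ne_top {n : ℕ} {p : ℝ≥0∞} (hp : p ≠ 0) {f : E n → ℝ≥0∞}
    (hf : Measurable f) (h : eN p f volume ≠ ∞) : ∀ᵐ x, f x < ∞ := by
  unfold eN at h
  split_ifs at h with hp'
  · exact ae_lt_of_essSup_lt h.lt_top
  · have hp0 : 0 < p.toReal := ENNReal.toReal_pos hp hp'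
    have h1 : ∫⁻ y, f y ^ p.toReal ≠ ∞ :=
      ((ENNReal.rpow_lt_top_iff_of_pos (by positivity)).1 h.lt_top).ne
    filter_upwards [ae_lt_top (hf.pow_const _) h1] with x hx
    exact (ENNReal.rpow_lt_top_iff_of_pos hp0).1 hx

/-! ### Pointwise bounds for the commutator kernel -/

lemma abs_commutator_kernel_le {n m : ℕ} {α δ A₁ Cb : ℝ} (K : E n → ℝ) (b : E n → ℝ)
    (hCb : 0 ≤ Cb) (hsize : SizeCond n α A₁ K)
    (hb : LipDelta δ Cb b) (x z : E n) (hxz : x ≠ z) :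
    |(b x - b z) ^ m * K (x - z)| ≤ A₁ * Cb ^ m * ‖x - z‖ ^ (m * δ + α - n) := by
  have hpos : 0 < ‖x - z‖ := norm_pos_iff.2 (sub_ne_zero.2 hxz)
  have h1 := hsize (x - z) (sub_ne_zero.2 hxz)
  have h2 := hb x z
  rw [dist_eq_norm] at h2
  rw [abs_mul, abs_pow]
  calc |b x - b z| ^ m * |K (x - z)|
      ≤ (Cb * ‖x - z‖ ^ δ) ^ m * (A₁ * ‖x - z‖ ^ (α - n)) := by gcongr
    _ = A₁ * Cb ^ m * (‖x - z‖ ^ (m * δ) * ‖x - z‖ ^ (α - n)) := by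
        rw [mul_pow, ← Real.rpow_natCast (‖x - z‖ ^ δ), ← Real.rpow_mul hpos.le, mul_comm δ]; ring
    _ = _ := by rw [← Real.rpow_add hpos]; congr 2; ring

/-- Regularity of the commutator kernel: away from the ball its oscillation over the ball gains
the factor `(R/d)^δ` over the size bound `d^(mδ+α-n)`. The telescoping of `(b x - b z)^m`
contributes exactly `(R/d)^δ`, the smoothness of `K` the smaller `(R/d)^γ`. -/
lemma commutator_kernel_far {n m : ℕ} {α δ γ A₁ A₂ Cb : ℝ} (K : E n → ℝ) (b : E n → ℝ)
    (hαn : α < n) (hγ0 : 0 < γ) (hδ0 : 0 < δ) (hδγ : δ < γ) (hA₁ : 0 ≤ A₁) (hA₂ : 0 ≤ A₂)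
    (hCb : 0 ≤ Cb) (hsize : SizeCond n α A₁ K) (hsmooth : SmoothCond n α γ A₂ K)
    (hb : LipDelta δ Cb b) (c z : E n) (R : ℝ) (hR : 0 < R) (hz : 5 * R ≤ dist c z)
    (x x' : E n) (hx : x ∈ ball c R) (hx' : x' ∈ ball c R) :
    |(b x - b z) ^ m * K (x - z) - (b x' - b z) ^ m * K (x' - z)| ≤
      (2 ^ δ * m * (2 ^ δ) ^ (m - 1) * A₁ * 2 ^ (n - α)
        + (2 ^ δ) ^ m * A₂ * 2 ^ γ * 2 ^ (n - α + γ)) * Cb ^ m * R ^ δ *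
        dist c z ^ (-((n : ℝ) - (m * δ + α) + δ)) := by
  set d := dist c z with hd
  have hd0 : 0 < d := by linarith
  rw [mem_ball] at hx hx'
  have t1 := dist_triangle c x z
  have t2 := dist_triangle x c z
  have t3 := dist_triangle c x' z
  have t4 := dist_triangle x' c z
  have t5 := dist_triangle x c x'
  rw [dist_comm c x] at t1
  rw [dist_comm c x'] at t3 t5
  have hxx : dist x x' ≤ 2 * R := by linarith
  have hlo : d / 2 ≤ dist x z := by linarith
  have hup : dist x z ≤ 2 * d := by linarith
  have hup' : dist x' z ≤ 2 * d := by linarith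
  have e1 : |b x - b z| ≤ Cb * (2 * d) ^ δ :=
    (hb x z).trans (by gcongr)
  have e2 : |b x' - b z| ≤ Cb * (2 * d) ^ δ :=
    (hb x' z).trans (by gcongr)
  have e3 : |b x - b x'| ≤ Cb * (2 * R) ^ δ :=
    (hb x x').trans (by gcongr)
  have hxz : x ≠ z := by
    intro h
    rw [h, dist_self] at hlo
    linarith
  have e4 : |K (x - z)| ≤ A₁ * (d / 2) ^ (α - n) := by
    refine (hsize _ (sub_ne_zero.2 hxz)).trans ?_
    rw [← dist_eq_norm]
    gcongr ?_ * ?_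
    exact Real.rpow_le_rpow_of_nonpos (by positivity) hlo (by linarith)
  have e5 : |K (x - z) - K (x' - z)| ≤ A₂ * (2 * R) ^ γ / (d / 2) ^ ((n : ℝ) - α + γ) := by
    have := hsmooth x x' z (by linarith)
    refine (le_trans (le_add_of_nonneg_right (abs_nonneg _)) this).trans ?_
    have : 0 ≤ (n : ℝ) - α + γ := by linarith
    gcongr
  have e6 : |(b x - b z) ^ m - (b x' - b z) ^ m| ≤
      Cb * (2 * R) ^ δ * m * (Cb * (2 * d) ^ δ) ^ (m - 1) := by
    refine (abs_pow_sub_pow_le _ _ _).trans ?_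
    rw [sub_sub_sub_cancel_right]
    gcongr
    exact max_le e1 e2
  have e7 : |(b x' - b z) ^ m| ≤ (Cb * (2 * d) ^ δ) ^ m := by
    rw [abs_pow]; gcongr
  have split : (b x - b z) ^ m * K (x - z) - (b x' - b z) ^ m * K (x' - z) =
      ((b x - b z) ^ m - (b x' - b z) ^ m) * K (x - z)
      + (b x' - b z) ^ m * (K (x - z) - K (x' - z)) := by ring
  -- the two pieces, in the form in which powers of `d` and `R` are collected
  have f1 : Cb * (2 * R) ^ δ * m * (Cb * (2 * d) ^ δ) ^ (m - 1) * (A₁ * (d / 2) ^ (α - n)) =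
      (2 ^ δ * m * (2 ^ δ) ^ (m - 1) * A₁ * 2 ^ (n - α)) * Cb ^ m * R ^ δ *
        d ^ (-((n : ℝ) - (m * δ + α) + δ)) := by
    rcases Nat.eq_zero_or_pos m with rfl | hm
    · simp
    obtain ⟨k, rfl⟩ : ∃ k, m = k + 1 := ⟨m - 1, by omega⟩
    have hp : d ^ (-((n : ℝ) - ((k + 1 : ℕ) * δ + α) + δ)) = (d ^ δ) ^ k * d ^ (α - n) := by
      rw [← Real.rpow_natCast (d ^ δ), ← Real.rpow_mul hd0.le, ← Real.rpow_add hd0]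
      congr 1
      push_cast
      ring
    have hq : (d / 2) ^ (α - n) = d ^ (α - n) * 2 ^ (n - α) := by
      rw [Real.div_rpow hd0.le zero_le_two, div_eq_mul_inv, ← Real.rpow_neg zero_le_two, neg_sub]
    rw [hp, hq, Real.mul_rpow zero_le_two hR.le, Real.mul_rpow zero_le_two hd0.le,
      Nat.add_sub_cancel]
    ring
  have f2 : (Cb * (2 * d) ^ δ) ^ m * (A₂ * (2 * R) ^ γ / (d / 2) ^ ((n : ℝ) - α + γ)) ≤
      ((2 ^ δ) ^ m * A₂ * 2 ^ γ * 2 ^ (n - α + γ)) * Cb ^ m * R ^ δ *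
        d ^ (-((n : ℝ) - (m * δ + α) + δ)) := by
    have hp : d ^ (-((n : ℝ) - (m * δ + α) + δ)) = (d ^ δ) ^ m * d ^ (α - n - γ) * d ^ (γ - δ) := by
      rw [← Real.rpow_natCast (d ^ δ), ← Real.rpow_mul hd0.le, ← Real.rpow_add hd0,
        ← Real.rpow_add hd0]
      congr 1
      ring
    have hq : ((d / 2) ^ ((n : ℝ) - α + γ))⁻¹ = d ^ (α - n - γ) * 2 ^ (n - α + γ) := by
      rw [Real.div_rpow hd0.le zero_le_two, inv_div, div_eq_mul_inv, ← Real.rpow_neg hd0.le,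
        mul_comm]
      congr 2
      ring
    have hRd : R ^ γ ≤ R ^ δ * d ^ (γ - δ) := by
      have : R ^ γ = R ^ δ * R ^ (γ - δ) := by rw [← Real.rpow_add hR]; congr 1; ring
      rw [this]
      have : 0 ≤ γ - δ := by linarith
      gcongr
      linarith
    rw [hp, div_eq_mul_inv, hq, Real.mul_rpow zero_le_two hR.le, Real.mul_rpow zero_le_two hd0.le]
    calc _ = ((2 ^ δ) ^ m * A₂ * 2 ^ γ * 2 ^ (n - α + γ)) * Cb ^ m *
          ((d ^ δ) ^ m * d ^ (α - n - γ)) * R ^ γ := by ring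
      _ ≤ ((2 ^ δ) ^ m * A₂ * 2 ^ γ * 2 ^ (n - α + γ)) * Cb ^ m *
          ((d ^ δ) ^ m * d ^ (α - n - γ)) * (R ^ δ * d ^ (γ - δ)) := by gcongr
      _ = _ := by ring
  rw [split]
  calc _ ≤ |(b x - b z) ^ m - (b x' - b z) ^ m| * |K (x - z)|
        + |(b x' - b z) ^ m| * |K (x - z) - K (x' - z)| := by
        refine (abs_add_le _ _).trans ?_
        rw [abs_mul, abs_mul]
    _ ≤ Cb * (2 * R) ^ δ * m * (Cb * (2 * d) ^ δ) ^ (m - 1) * (A₁ * (d / 2) ^ (α - n))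
        + (Cb * (2 * d) ^ δ) ^ m * (A₂ * (2 * R) ^ γ / (d / 2) ^ ((n : ℝ) - α + γ)) := by
        gcongr
    _ ≤ _ := by rw [f1, add_mul, add_mul, add_mul]; gcongr

/-! ### Mean oscillations over a ball -/

/-- The mean oscillation of an integral operator over a set is controlled by the mean oscillation
of its kernel in the first variable, by Jensen's inequality and Tonelli's theorem. -/
lemma lintegral_osc_le {n : ℕ} (k : E n → E n → ℝ) (hk : Measurable (Function.uncurry k))
    (f Tf : E n → ℝ) (hf : Measurable f) (B : Set (E n)) (hB0 : volume B ≠ 0)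
    (hBt : volume B ≠ ∞) (hTf : IntegrableOn Tf B)
    (hT : ∀ᵐ x, Integrable (fun z => k x z * f z) ∧ Tf x = ∫ z, k x z * f z) :
    ∫⁻ y in B, ENNReal.ofReal |Tf y - (⨍ z in B, Tf z)| ≤
      (volume B)⁻¹ * ∫⁻ z, (∫⁻ x in B, ∫⁻ x' in B, ‖k x z - k x' z‖ₑ) * ‖f z‖ₑ := by
  have hfin : IsFiniteMeasure (volume.restrict B) := ⟨by simpa using hBt.lt_top⟩
  have hT' := ae_restrict_of_ae (s := B) hT
  have hk1 : Measurable fun p : E n × E n => k p.1 p.2 := hk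
  have step1 : ∀ y, ENNReal.ofReal |Tf y - (⨍ z in B, Tf z)| ≤
      (volume B)⁻¹ * ∫⁻ x' in B, ‖Tf y - Tf x'‖ₑ := by
    intro y
    have hreal : volume.real B ≠ 0 := by
      simp [Measure.real, ENNReal.toReal_eq_zero_iff, hB0, hBt]
    have : Tf y - (⨍ z in B, Tf z) = (volume.real B)⁻¹ * ∫ z in B, (Tf y - Tf z) := by
      rw [setAverage_eq, integral_sub (integrable_const _) hTf, setIntegral_const]
      simp only [smul_eq_mul]
      field_simp
    rw [← Real.norm_eq_abs, ofReal_norm, this, enorm_mul]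
    gcongr
    · rw [enorm_inv hreal, Real.enorm_of_nonneg measureReal_nonneg, ofReal_measureReal hBt]
    · exact enorm_integral_le_lintegral_enorm _
  have step2 : ∫⁻ y in B, ∫⁻ x' in B, ‖Tf y - Tf x'‖ₑ ≤
      ∫⁻ y in B, ∫⁻ x' in B, ∫⁻ z, ‖k y z - k x' z‖ₑ * ‖f z‖ₑ := by
    refine lintegral_mono_ae ?_
    filter_upwards [hT'] with y hy
    refine lintegral_mono_ae ?_
    filter_upwards [hT'] with x' hx'
    rw [hy.2, hx'.2, ← integral_sub hy.1 hx'.1]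
    refine (enorm_integral_le_lintegral_enorm _).trans (le_of_eq ?_)
    refine lintegral_congr fun z => ?_
    rw [← sub_mul, enorm_mul]
  have hm3 : Measurable fun q : (E n × E n) × E n => ‖k q.1.1 q.2 - k q.1.2 q.2‖ₑ * ‖f q.2‖ₑ := by
    have h1 : Measurable fun q : (E n × E n) × E n => k q.1.1 q.2 :=
      hk1.comp (f := fun q : (E n × E n) × E n => (q.1.1, q.2)) (by fun_prop)
    have h2 : Measurable fun q : (E n × E n) × E n => k q.1.2 q.2 :=
      hk1.comp (f := fun q : (E n × E n) × E n => (q.1.2, q.2)) (by fun_prop)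
    fun_prop
  have step3 : ∫⁻ y in B, ∫⁻ x' in B, ∫⁻ z, ‖k y z - k x' z‖ₑ * ‖f z‖ₑ =
      ∫⁻ z, (∫⁻ x in B, ∫⁻ x' in B, ‖k x z - k x' z‖ₑ) * ‖f z‖ₑ := by
    have e1 := lintegral_prod (μ := volume.restrict B) (ν := volume.restrict B)
      (fun p : E n × E n => ∫⁻ z, ‖k p.1 z - k p.2 z‖ₑ * ‖f z‖ₑ)
      (hm3.lintegral_prod_right' (ν := volume)).aemeasurable
    rw [← e1, lintegral_lintegral_swap hm3.aemeasurable]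
    refine lintegral_congr fun z => ?_
    have hmz : Measurable fun p : E n × E n => ‖k p.1 z - k p.2 z‖ₑ := by
      have h1 : Measurable fun p : E n × E n => k p.1 z :=
        hk1.comp (f := fun p : E n × E n => (p.1, z)) (by fun_prop)
      have h2 : Measurable fun p : E n × E n => k p.2 z :=
        hk1.comp (f := fun p : E n × E n => (p.2, z)) (by fun_prop)
      fun_prop
    rw [lintegral_mul_const _ hmz, lintegral_prod _ hmz.aemeasurable]
  calc _ ≤ ∫⁻ y in B, (volume B)⁻¹ * ∫⁻ x' in B, ‖Tf y - Tf x'‖ₑ := lintegral_mono step1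
    _ = (volume B)⁻¹ * ∫⁻ y in B, ∫⁻ x' in B, ‖Tf y - Tf x'‖ₑ :=
        lintegral_const_mul' _ _ (ENNReal.inv_ne_top.2 hB0)
    _ ≤ _ := by rw [← step3]; gcongr

/-- Mean oscillation of the commutator kernel `k(·, z)` over the ball `B(c, R)`: uniformly in `z`
it is at most a constant times `Cb^m R^δ (κR + |c - z|)^(-(n-(mδ+α)+δ))`, the weight that appears in
the class `H`. For `z` near the ball this uses only the size of `k`, for the other `z` its
regularity. -/
lemma kernel_osc_le {n m : ℕ} {α δ γ A₁ A₂ κ : ℝ} (hn : 1 ≤ n) (hα0 : 0 < α) (hαn : α < n)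
    (hγ0 : 0 < γ) (hδ0 : 0 < δ) (hδγ : δ < γ) (hmδ : (m : ℝ) * δ < n - α)
    (hA₁ : 0 ≤ A₁) (hA₂ : 0 ≤ A₂) (hκ : 0 < κ) (K : E n → ℝ) (hKm : Measurable K)
    (hsize : SizeCond n α A₁ K) (hsmooth : SmoothCond n α γ A₂ K) :
    ∃ C : ℝ, 0 ≤ C ∧ ∀ (b : E n → ℝ) (Cb : ℝ), Measurable b → 0 ≤ Cb → LipDelta δ Cb b →
      ∀ (c z : E n) (R : ℝ), 0 < R →
      ∫⁻ x in ball c R, ∫⁻ x' in ball c R,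
          ‖(b x - b z) ^ m * K (x - z) - (b x' - b z) ^ m * K (x' - z)‖ₑ ≤
        volume (ball c R) * volume (ball c R) *
          ENNReal.ofReal (C * Cb ^ m * R ^ δ * (κ * R + dist c z) ^ (-((n : ℝ) - (m * δ + α) + δ)))
      := by
  have hmδ0 : 0 ≤ (m : ℝ) * δ := by positivity
  set a : ℝ := m * δ + α with ha_def
  have ha : 0 < a := by linarith
  set s : ℝ := n - a + δ with hs_def
  have hs : 0 < s := by linarith
  set F : ℝ := 2 ^ δ * m * (2 ^ δ) ^ (m - 1) * A₁ * 2 ^ (n - α)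
        + (2 ^ δ) ^ m * A₂ * 2 ^ γ * 2 ^ (n - α + γ) with hF
  have hF0 : 0 ≤ F := by positivity
  set G : ℝ := 2 * (A₁ * (n / a * 6 ^ a)) with hG
  have hG0 : 0 ≤ G := by positivity
  have : Nonempty (Fin n) := ⟨⟨0, hn⟩⟩
  refine ⟨G * (κ + 5) ^ s + F * (1 + κ) ^ s, by positivity, ?_⟩
  intro b Cb hbm hCb hb c z R hR
  have hd0 : 0 ≤ dist c z := dist_nonneg
  have hX : 0 < κ * R + dist c z := by positivity
  rcases le_or_gt (5 * R) (dist c z) with hz | hz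
  · have hdpos : 0 < dist c z := by linarith
    have hdist : dist c z ^ (-s) ≤ (1 + κ) ^ s * (κ * R + dist c z) ^ (-s) := by
      rw [Real.rpow_neg hd0, Real.rpow_neg hX.le, ← div_eq_mul_inv, inv_eq_one_div,
        div_le_div_iff₀ (by positivity) (by positivity), one_mul,
        ← Real.mul_rpow (by positivity) hd0]
      gcongr
      nlinarith
    have hle : ∀ x ∈ ball c R, ∀ x' ∈ ball c R,
        ‖(b x - b z) ^ m * K (x - z) - (b x' - b z) ^ m * K (x' - z)‖ₑ ≤
        ENNReal.ofReal ((G * (κ + 5) ^ s + F * (1 + κ) ^ s) * Cb ^ m * R ^ δ *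
          (κ * R + dist c z) ^ (-s)) := by
      intro x hx x' hx'
      rw [← ofReal_norm, Real.norm_eq_abs]
      refine ENNReal.ofReal_le_ofReal ?_
      refine (commutator_kernel_far K b hαn hγ0 hδ0 hδγ hA₁ hA₂ hCb hsize hsmooth hb c z R hR hz
        x x' hx hx').trans ?_
      rw [← ha_def, ← hs_def, ← hF]
      calc F * Cb ^ m * R ^ δ * dist c z ^ (-s)
          ≤ F * Cb ^ m * R ^ δ * ((1 + κ) ^ s * (κ * R + dist c z) ^ (-s)) := by gcongr
        _ = (0 + F * (1 + κ) ^ s) * Cb ^ m * R ^ δ * (κ * R + dist c z) ^ (-s) := by ring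
        _ ≤ _ := by gcongr; positivity
    calc _ ≤ ∫⁻ x in ball c R, ∫⁻ x' in ball c R,
          ENNReal.ofReal ((G * (κ + 5) ^ s + F * (1 + κ) ^ s) * Cb ^ m * R ^ δ *
          (κ * R + dist c z) ^ (-s)) :=
          setLIntegral_mono' measurableSet_ball fun x hx =>
            setLIntegral_mono' measurableSet_ball fun x' hx' => hle x hx x' hx'
      _ = _ := by simp only [setLIntegral_const]; ring
  · -- `B(c, R) ⊆ B(z, 6R)`, so the kernel integrates to order `R^a`
    have hP : ∫⁻ x in ball c R, ‖(b x - b z) ^ m * K (x - z)‖ₑ ≤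
        ENNReal.ofReal (A₁ * Cb ^ m) *
          ENNReal.ofReal ((n * volume.real (ball (0 : E n) 1) / a) * (6 * R) ^ a) := by
      rw [← lintegral_riesz_le n hn a (6 * R) ha (by positivity),
        ← lintegral_sub_right_eq_self (fun x : E n => ENNReal.ofReal
          ((Set.Iio (6 * R)).indicator (fun t : ℝ => t ^ (a - n)) ‖x‖)) z, ← lintegral_const_mul' _ _ ENNReal.ofReal_ne_top]
      refine le_trans ?_ (setLIntegral_le_lintegral (ball c R) _)
      refine lintegral_mono_ae ?_
      have hne : ∀ᵐ x ∂(volume.restrict (ball c R)), x ≠ z :=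
        ae_restrict_of_ae (by simp [ae_iff])
      filter_upwards [hne, ae_restrict_mem measurableSet_ball] with x hxz hx
      rw [← ENNReal.ofReal_mul (by positivity), ← ofReal_norm, Real.norm_eq_abs]
      refine ENNReal.ofReal_le_ofReal ?_
      have hmem : ‖x - z‖ ∈ Set.Iio (6 * R) := by
        rw [mem_ball] at hx
        rw [← dist_eq_norm, Set.mem_Iio]
        linarith [dist_triangle x c z]
      rw [Set.indicator_of_mem hmem]
      exact abs_commutator_kernel_le K b hCb hsize hb x z hxz
    have hR' : R ^ a ≤ R ^ n * R ^ δ * ((κ + 5) ^ s * (κ * R + dist c z) ^ (-s)) := by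
      have h1 : R ^ a = R ^ n * R ^ δ * R ^ (-s) := by
        rw [← Real.rpow_natCast, ← Real.rpow_add hR, ← Real.rpow_add hR]
        congr 1
        rw [hs_def]; ring
      rw [h1]
      gcongr
      rw [Real.rpow_neg hR.le, Real.rpow_neg hX.le, ← div_eq_mul_inv, inv_eq_one_div,
        div_le_div_iff₀ (by positivity) (by positivity), one_mul,
        ← Real.mul_rpow (by positivity) hR.le]
      gcongr
      nlinarith
    have hV : volume (ball c R) = ENNReal.ofReal (R ^ n * volume.real (ball (0 : E n) 1)) := by
      rw [Measure.addHaar_ball volume c hR.le, ENNReal.ofReal_mul (by positivity),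
        ofReal_measureReal measure_ball_lt_top.ne]
      simp
    set φ : E n → ℝ := fun x => (b x - b z) ^ m * K (x - z) with hφ
    have hφm : Measurable fun x => ‖φ x‖ₑ := by
      have : Measurable φ := by
        rw [hφ]
        exact ((hbm.sub_const _).pow_const _).mul (hKm.comp (measurable_id.sub_const z))
      exact this.enorm
    calc ∫⁻ x in ball c R, ∫⁻ x' in ball c R, ‖φ x - φ x'‖ₑ
        ≤ ∫⁻ x in ball c R, ∫⁻ x' in ball c R, (‖φ x‖ₑ + ‖φ x'‖ₑ) := by
          gcongr; exact enorm_sub_le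
      _ = volume (ball c R) * (2 * ∫⁻ x in ball c R, ‖φ x‖ₑ) := by
          have : ∀ x, ∫⁻ x' in ball c R, (‖φ x‖ₑ + ‖φ x'‖ₑ) =
              ‖φ x‖ₑ * volume (ball c R) + ∫⁻ x' in ball c R, ‖φ x'‖ₑ := fun x => by
            rw [lintegral_add_left measurable_const, setLIntegral_const]
          simp only [this]
          rw [lintegral_add_right _ measurable_const, setLIntegral_const,
            lintegral_mul_const _ hφm]
          ring
      _ ≤ volume (ball c R) * (2 * (ENNReal.ofReal (A₁ * Cb ^ m) *
          ENNReal.ofReal ((n * volume.real (ball (0 : E n) 1) / a) * (6 * R) ^ a))) := by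
          gcongr
      _ ≤ volume (ball c R) * (volume (ball c R) *
          ENNReal.ofReal ((G * (κ + 5) ^ s + F * (1 + κ) ^ s) * Cb ^ m * R ^ δ *
          (κ * R + dist c z) ^ (-s))) := by
          gcongr _ * ?_
          rw [hV, ← ENNReal.ofReal_mul (by positivity), ← ENNReal.ofReal_mul (by positivity),
            two_mul, ← ENNReal.ofReal_add (by positivity) (by positivity), ← two_mul]
          refine ENNReal.ofReal_le_ofReal ?_
          set ω := volume.real (ball (0 : E n) 1)
          have hω : 0 ≤ ω := measureReal_nonneg
          rw [Real.mul_rpow (by positivity) hR.le]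
          calc 2 * (A₁ * Cb ^ m * (n * ω / a * (6 ^ a * R ^ a)))
              = G * Cb ^ m * ω * R ^ a := by rw [hG]; ring
            _ ≤ G * Cb ^ m * ω *
                (R ^ n * R ^ δ * ((κ + 5) ^ s * (κ * R + dist c z) ^ (-s))) := by gcongr
            _ = R ^ n * ω * ((G * (κ + 5) ^ s + 0) * Cb ^ m * R ^ δ *
                (κ * R + dist c z) ^ (-s)) := by ring
            _ ≤ _ := by gcongr; positivity
      _ = _ := by ring

/-! ### The two-weight estimate -/

/-- two-weight boundedness `L^r(v) → 𝕃_w(δ̃/n)` for higher order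
commutators of fractional integral operators with kernels satisfying `S*_α` and
`H*_{α,∞}`, `0 < α < n`, for pairs `(v,w) ∈ H(r, α̃, δ̃)` with
`δ̃ ≤ min{δ, α̃ − n/r}`. -/
theorem statement15 (n m : ℕ) (α δ δt αt γ A₁ A₂ : ℝ) (r r' : ℝ≥0∞)
    (hn : 1 ≤ n) (hα0 : 0 < α) (hαn : α < (n : ℝ))
    (hγ0 : 0 < γ) (hγ1 : γ ≤ 1) (hδ0 : 0 < δ) (hδγ : δ < γ)
    (hmδ : (m : ℝ) * δ < (n : ℝ) - α) (hαt : αt = (m : ℝ) * δ + α)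
    (hr : 1 ≤ r) (hconj : r⁻¹ + r'⁻¹ = 1)
    (hδt1 : δt ≤ δ) (hδt2 : δt ≤ αt - (n : ℝ) * r⁻¹.toReal)
    (K : E n → ℝ) (hKm : Measurable K) (hA₁ : 0 ≤ A₁) (hA₂ : 0 ≤ A₂)
    (hsize : SizeCond n α A₁ K) (hsmooth : SmoothCond n α γ A₂ K)
    (v w : E n → ℝ≥0∞) (hvm : Measurable v) (hwm : Measurable w)
    (Cw : ℝ≥0) (hH : Hclass n r' αt δ δt v w (Cw : ℝ≥0∞)) :
    ∃ C : ℝ≥0,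
      ∀ (b : E n → ℝ) (Cb : ℝ), Measurable b → 0 ≤ Cb → LipDelta δ Cb b →
      ∀ (f Tf : E n → ℝ), Measurable f →
        eN r (fun z => ENNReal.ofReal |f z| * (v z)⁻¹) volume < ∞ →
        (∀ᵐ x ∂(volume : Measure (E n)),
          Integrable (fun z => (b x - b z) ^ m * K (x - z) * f z) volume ∧
            Tf x = ∫ z, (b x - b z) ^ m * K (x - z) * f z) →
        LocallyIntegrable Tf volume →
        ∀ (c : E n) (R : ℝ), 0 < R →
          essSup (fun y => (w y)⁻¹) (volume.restrict (ball c R)) *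
              volume (ball c R) ^ (-(1 + δt / (n : ℝ))) *
              (∫⁻ y in ball c R, ENNReal.ofReal |Tf y - (⨍ z in ball c R, Tf z)|) ≤
            (C : ℝ≥0∞) * (ENNReal.ofReal Cb) ^ m *
              eN r (fun z => ENNReal.ofReal |f z| * (v z)⁻¹) volume := by
  have : Nonempty (Fin n) := ⟨⟨0, hn⟩⟩
  have hn0 : (0 : ℝ) < n := by exact_mod_cast hn
  subst hαt
  set s : ℝ := (n : ℝ) - (m * δ + α) + δ with hs
  have hr0 : r ≠ 0 := (zero_lt_one.trans_le hr).ne'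
  have hr'0 : r' ≠ 0 := by
    rintro rfl
    simp at hconj
  -- `κ` is chosen so that `|B(c, R)|^(1/n) = κ R`
  set ω : ℝ := volume.real (ball (0 : E n) 1) with hω
  have hω0 : 0 < ω := ENNReal.toReal_pos (measure_ball_pos volume _ zero_lt_one).ne' measure_ball_lt_top.ne
  set κ : ℝ := ω ^ ((1 : ℝ) / n) with hκ
  have hκ0 : 0 < κ := by positivity
  obtain ⟨C, hC0, hC⟩ := kernel_osc_le (m := m) hn hα0 hαn hγ0 hδ0 hδγ hmδ hA₁ hA₂ hκ0 K hKm
    hsize hsmooth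
  refine ⟨(C * κ ^ (-δ)).toNNReal * Cw, ?_⟩
  intro b Cb hbm hCb hb f Tf hf hN hT hTf c R hR
  set W := essSup (fun y => (w y)⁻¹) (volume.restrict (ball c R)) with hW
  set V := volume (ball c R) with hV
  have hV0 : V ≠ 0 := (measure_ball_pos volume c hR).ne'
  have hVt : V ≠ ∞ := measure_ball_lt_top.ne
  have hVn : V ^ ((1 : ℝ) / n) = ENNReal.ofReal (κ * R) := by
    have : V = ENNReal.ofReal (ω * R ^ n) := by
      rw [hV, Measure.addHaar_ball volume c hR.le, mul_comm ω, ENNReal.ofReal_mul (by positivity),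
        ofReal_measureReal measure_ball_lt_top.ne]
      simp
    rw [this, ENNReal.ofReal_rpow_of_nonneg (by positivity) (by positivity),
      Real.mul_rpow hω0.le (by positivity), ← Real.rpow_natCast, ← Real.rpow_mul hR.le,
      mul_one_div_cancel hn0.ne', Real.rpow_one]
  have hVδ : ENNReal.ofReal (R ^ δ) = ENNReal.ofReal (κ ^ (-δ)) * V ^ (δ / n) := by
    rw [div_eq_mul_one_div, mul_comm δ, ENNReal.rpow_mul, hVn,
      ENNReal.ofReal_rpow_of_pos (by positivity), ← ENNReal.ofReal_mul (by positivity),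
      Real.mul_rpow hκ0.le hR.le, ← mul_assoc, ← Real.rpow_add hκ0]
    simp
  set g : E n → ℝ≥0∞ := fun z => ENNReal.ofReal ((κ * R + dist c z) ^ (-s)) with hg
  have hX : ∀ z, 0 < κ * R + dist c z := fun z => by positivity
  have hgH : ∀ z, (V ^ ((1 : ℝ) / n) + ENNReal.ofReal (dist c z)) ^ (-s) = g z := fun z => by
    rw [hVn, ← ENNReal.ofReal_add (by positivity) dist_nonneg, ENNReal.ofReal_rpow_of_pos (hX z)]
  have hgm : Measurable g := by
    rw [hg]
    fun_prop
  have hg0 : ∀ z, g z ≠ 0 := fun z => by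
    have := hX z
    simp only [hg, ne_eq, ENNReal.ofReal_eq_zero, not_le]
    positivity
  have hH' : W * V ^ ((δ - δt) / n) * eN r' (fun y => v y * g y) volume ≤ Cw := by
    have := hH c R hR
    simp only [← hV, ← hW, ← hs, hgH] at this
    exact this
  set N := eN r (fun z => ENNReal.ofReal |f z| * (v z)⁻¹) volume with hNdef
  set N' := eN r' (fun y => v y * g y) volume with hN'
  rcases eq_or_ne W 0 with hW0 | hW0
  · simp [hW0]
  -- since `W ≠ 0`, the class condition makes `N'` finite, whence `v` is finite almost everywhere
  have hN't : N' ≠ ∞ := by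
    intro h
    rw [h, ENNReal.mul_top (mul_ne_zero hW0 (ENNReal.rpow_pos (pos_iff_ne_zero.2 hV0) hVt).ne')] at hH'
    exact absurd (top_le_iff.1 hH') ENNReal.coe_ne_top
  have hmF : Measurable fun z => ENNReal.ofReal |f z| * (v z)⁻¹ := by fun_prop
  have hmG : Measurable fun z => v z * g z := hvm.mul hgm
  have hfg : ∫⁻ z, g z * ‖f z‖ₑ ≤ N * N' := by
    refine le_trans (le_of_eq ?_) (eN_holder r r' hr hconj _ _ hmF hmG)
    refine lintegral_congr_ae ?_
    filter_upwards [ae_lt_top_of_eN_ne_top hr0 hmF hN.ne,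
      ae_lt_top_of_eN_ne_top hr'0 hmG hN't] with z hz1 hz2
    rw [← ofReal_norm, Real.norm_eq_abs]
    have hvt : v z ≠ ∞ := by
      intro h
      rw [h, ENNReal.top_mul (hg0 z)] at hz2
      exact lt_irrefl _ hz2
    rcases eq_or_ne (v z) 0 with hv0 | hv0
    · have hf0 : ENNReal.ofReal |f z| = 0 := by
        by_contra h
        rw [hv0, ENNReal.inv_zero, ENNReal.mul_top h] at hz1
        exact lt_irrefl _ hz1
      simp [hf0]
    · calc g z * ENNReal.ofReal |f z| = ENNReal.ofReal |f z| * ((v z)⁻¹ * v z) * g z := by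
            rw [ENNReal.inv_mul_cancel hv0 hvt]; ring
        _ = _ := by ring
  have hJ : ∫⁻ y in ball c R, ENNReal.ofReal |Tf y - (⨍ z in ball c R, Tf z)| ≤
      V * (ENNReal.ofReal C * ENNReal.ofReal Cb ^ m * ENNReal.ofReal (R ^ δ)) * (N * N') := by
    have hk : Measurable (Function.uncurry fun x z => (b x - b z) ^ m * K (x - z)) := by
      have h1 : Measurable fun p : E n × E n => K (p.1 - p.2) :=
        hKm.comp (measurable_fst.sub measurable_snd)
      have h2 : Measurable fun p : E n × E n => (b p.1 - b p.2) ^ m :=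
        ((hbm.comp measurable_fst).sub (hbm.comp measurable_snd)).pow_const m
      exact h2.mul h1
    have hTB : IntegrableOn Tf (ball c R) :=
      (hTf.integrableOn_isCompact (isCompact_closedBall c R)).mono_set ball_subset_closedBall
    refine (lintegral_osc_le _ hk f Tf hf (ball c R) hV0 hVt hTB hT).trans ?_
    calc _ ≤ V⁻¹ * ∫⁻ z, V * V * (ENNReal.ofReal C * ENNReal.ofReal Cb ^ m *
          ENNReal.ofReal (R ^ δ)) * (g z * ‖f z‖ₑ) := by
          refine mul_le_mul_right (lintegral_mono fun z => ?_) _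
          simp only []
          rw [← mul_assoc]
          refine mul_le_mul_left ?_ _
          refine (hC b Cb hbm hCb hb c z R hR).trans (le_of_eq ?_)
          rw [ENNReal.ofReal_mul (by positivity), ENNReal.ofReal_mul (by positivity),
            ENNReal.ofReal_mul hC0, ENNReal.ofReal_pow hCb]
          ring
      _ = (V⁻¹ * V) * (V * (ENNReal.ofReal C * ENNReal.ofReal Cb ^ m *
          ENNReal.ofReal (R ^ δ))) * ∫⁻ z, g z * ‖f z‖ₑ := by
          rw [lintegral_const_mul _ (by fun_prop : Measurable fun z => g z * ‖f z‖ₑ)]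
          ring
      _ ≤ _ := by
          rw [ENNReal.inv_mul_cancel hV0 hVt, one_mul]
          gcongr
  have hVV : V ^ (-(1 + δt / n)) * (V * V ^ (δ / n)) = V ^ ((δ - δt) / n) := by
    nth_rewrite 2 [← ENNReal.rpow_one V]
    rw [← ENNReal.rpow_add _ _ hV0 hVt, ← ENNReal.rpow_add _ _ hV0 hVt]
    congr 1
    ring
  calc _ ≤ W * V ^ (-(1 + δt / n)) *
        (V * (ENNReal.ofReal C * ENNReal.ofReal Cb ^ m * ENNReal.ofReal (R ^ δ)) * (N * N')) := by
        gcongr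
    _ = ENNReal.ofReal C * ENNReal.ofReal (κ ^ (-δ)) *
        (W * (V ^ (-(1 + δt / n)) * (V * V ^ (δ / n))) * N') * ENNReal.ofReal Cb ^ m * N := by
        rw [hVδ]; ring
    _ ≤ ENNReal.ofReal C * ENNReal.ofReal (κ ^ (-δ)) * Cw * ENNReal.ofReal Cb ^ m * N := by
        rw [hVV]
        gcongr
    _ = _ := by
        rw [← ENNReal.ofReal_mul hC0, ENNReal.coe_mul]
        rfl
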